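/- Let A be an approximately amenable Banach algebra, X and Y left Banach A-modules, and f: X → Y a bounded left A-module morphism admitting a bounded linear right inverse F: Y → X. Then there exists a net (f_α) of bounded linear right inverses of f such that ‖a·f_α − f_α·a‖ → 0 for every a ∈ A, where B(Y,X) carries the bimodule actions (a·g)(y) = a(g(y)) and (g·a)(y) = g(a·y). -/

import Mathlib

open Filter Topology TensorProduct

noncomputable section


open Filter Topology TensorProduct


/-! Banach bimodules and derivations -/

variable (A : Type) [NonUnitalNormedRing A] [NormedSpace ℂ A]
  [IsScalarTower ℂ A A] [SMulCommClass ℂ A A]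

/-- A Banach `A`-bimodule structure on a Banach space `X`: `l a` is the left action of `a`,
`r a` is the right action of `a`. -/
structure BanachBimod (X : Type) [NormedAddCommGroup X] [NormedSpace ℂ X] where
  l : A → X →L[ℂ] X
  r : A → X →L[ℂ] X
  l_add : ∀ a b, l (a + b) = l a + l b
  l_smul : ∀ (c : ℂ) a, l (c • a) = c • l a
  r_add : ∀ a b, r (a + b) = r a + r b
  r_smul : ∀ (c : ℂ) a, r (c • a) = c • r a
  l_bound : ∃ C : ℝ, ∀ a, ‖l a‖ ≤ C * ‖a‖
  r_bound : ∃ C : ℝ, ∀ a, ‖r a‖ ≤ C * ‖a‖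
  l_mul : ∀ a b, l (a * b) = (l a).comp (l b)
  r_mul : ∀ a b, r (a * b) = (r b).comp (r a)
  lr_comm : ∀ a b, (l a).comp (r b) = (r b).comp (l a)

variable {A}

namespace BanachBimod

variable {X : Type} [NormedAddCommGroup X] [NormedSpace ℂ X]

/-- The dual bimodule structure on `X →L[ℂ] ℂ`. -/
def dual (M : BanachBimod A X) : BanachBimod A (X →L[ℂ] ℂ) where
  l a := (ContinuousLinearMap.compL ℂ X X ℂ).flip (M.r a)
  r a := (ContinuousLinearMap.compL ℂ X X ℂ).flip (M.l a)
  l_add a b := by simp only [M.r_add, map_add]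
  l_smul c a := by simp only [M.r_smul, map_smul]
  r_add a b := by simp only [M.l_add, map_add]
  r_smul c a := by simp only [M.l_smul, map_smul]
  l_bound := by
    obtain ⟨C, hC⟩ := M.r_bound
    refine ⟨‖(ContinuousLinearMap.compL ℂ X X ℂ).flip‖ * C, fun a => ?_⟩
    calc ‖(ContinuousLinearMap.compL ℂ X X ℂ).flip (M.r a)‖
        ≤ ‖(ContinuousLinearMap.compL ℂ X X ℂ).flip‖ * ‖M.r a‖ :=
          (ContinuousLinearMap.compL ℂ X X ℂ).flip.le_opNorm _
      _ ≤ ‖(ContinuousLinearMap.compL ℂ X X ℂ).flip‖ * (C * ‖a‖) := by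
          exact mul_le_mul_of_nonneg_left (hC a) (norm_nonneg _)
      _ = ‖(ContinuousLinearMap.compL ℂ X X ℂ).flip‖ * C * ‖a‖ := by ring
  r_bound := by
    obtain ⟨C, hC⟩ := M.l_bound
    refine ⟨‖(ContinuousLinearMap.compL ℂ X X ℂ).flip‖ * C, fun a => ?_⟩
    calc ‖(ContinuousLinearMap.compL ℂ X X ℂ).flip (M.l a)‖
        ≤ ‖(ContinuousLinearMap.compL ℂ X X ℂ).flip‖ * ‖M.l a‖ :=
          (ContinuousLinearMap.compL ℂ X X ℂ).flip.le_opNorm _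
      _ ≤ ‖(ContinuousLinearMap.compL ℂ X X ℂ).flip‖ * (C * ‖a‖) := by
          exact mul_le_mul_of_nonneg_left (hC a) (norm_nonneg _)
      _ = ‖(ContinuousLinearMap.compL ℂ X X ℂ).flip‖ * C * ‖a‖ := by ring
  l_mul a b := by
    ext φ x
    simp [M.r_mul]
  r_mul a b := by
    ext φ x
    simp [M.l_mul]
  lr_comm a b := by
    ext φ x
    simpa using congrArg φ (congrFun (congrArg DFunLike.coe (M.lr_comm b a)) x)

/-- A continuous derivation from `A` into the bimodule `X`. -/
def IsDerivation (M : BanachBimod A X) (D : A →L[ℂ] X) : Prop :=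
  ∀ a b, D (a * b) = M.l a (D b) + M.r b (D a)

/-- `D` is inner. -/
def Inner (M : BanachBimod A X) (D : A →L[ℂ] X) : Prop :=
  ∃ x : X, ∀ a, D a = M.l a x - M.r a x

/-- `D` is approximately inner: some net of inner derivations converges to `D` pointwise
in norm. -/
def ApproxInner (M : BanachBimod A X) (D : A →L[ℂ] X) : Prop :=
  ∃ (ι : Type) (φ : Filter ι) (x : ι → X), φ.NeBot ∧
    ∀ a, Tendsto (fun i => M.l a (x i) - M.r a (x i)) φ (𝓝 (D a))

/-- `D` is sequentially approximately inner. -/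
def SeqApproxInner (M : BanachBimod A X) (D : A →L[ℂ] X) : Prop :=
  ∃ x : ℕ → X, ∀ a, Tendsto (fun n => M.l a (x n) - M.r a (x n)) atTop (𝓝 (D a))

/-- `D` is boundedly approximately inner: the approximating net of inner derivations is
bounded as a net of operators from `A` to `X`. -/
def BddApproxInner (M : BanachBimod A X) (D : A →L[ℂ] X) : Prop :=
  ∃ (ι : Type) (φ : Filter ι) (x : ι → X), φ.NeBot ∧
    (∃ C : ℝ, ∀ i a, ‖M.l a (x i) - M.r a (x i)‖ ≤ C * ‖a‖) ∧
    ∀ a, Tendsto (fun i => M.l a (x i) - M.r a (x i)) φ (𝓝 (D a))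

/-- `D` is uniformly approximately inner: inner derivations approximate `D` uniformly
on the unit ball of `A`, i.e. in operator norm. -/
def UnifApproxInner (M : BanachBimod A X) (D : A →L[ℂ] X) : Prop :=
  ∃ (ι : Type) (φ : Filter ι) (x : ι → X), φ.NeBot ∧
    ∀ ε > (0 : ℝ), ∀ᶠ i in φ, ∀ a, ‖D a - (M.l a (x i) - M.r a (x i))‖ ≤ ε * ‖a‖

/-- A derivation into the dual module `X →L[ℂ] ℂ` is weak* approximately inner. -/
def WeakStarApproxInner (M : BanachBimod A X) (D : A →L[ℂ] (X →L[ℂ] ℂ)) : Prop :=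
  ∃ (ι : Type) (φ : Filter ι) (x : ι → (X →L[ℂ] ℂ)), φ.NeBot ∧
    ∀ (a : A) (ξ : X),
      Tendsto (fun i => (M.dual.l a (x i) - M.dual.r a (x i)) ξ) φ (𝓝 (D a ξ))

end BanachBimod

variable (A)

/-- `A` is contractible: every continuous derivation into every Banach `A`-bimodule is inner. -/
def Contractible : Prop :=
  ∀ (X : Type) (_ : NormedAddCommGroup X) (_ : NormedSpace ℂ X) (M : BanachBimod A X)
    (D : A →L[ℂ] X), M.IsDerivation D → M.Inner D

def ApproximatelyContractible : Prop :=
  ∀ (X : Type) (_ : NormedAddCommGroup X) (_ : NormedSpace ℂ X) (M : BanachBimod A X)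
    (D : A →L[ℂ] X), M.IsDerivation D → M.ApproxInner D

def SeqApproximatelyContractible : Prop :=
  ∀ (X : Type) (_ : NormedAddCommGroup X) (_ : NormedSpace ℂ X) (M : BanachBimod A X)
    (D : A →L[ℂ] X), M.IsDerivation D → M.SeqApproxInner D

def UnifApproximatelyContractible : Prop :=
  ∀ (X : Type) (_ : NormedAddCommGroup X) (_ : NormedSpace ℂ X) (M : BanachBimod A X)
    (D : A →L[ℂ] X), M.IsDerivation D → M.UnifApproxInner D

def ApproximatelyAmenable : Prop :=
  ∀ (X : Type) (_ : NormedAddCommGroup X) (_ : NormedSpace ℂ X) (M : BanachBimod A X)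
    (D : A →L[ℂ] (X →L[ℂ] ℂ)), M.dual.IsDerivation D → M.dual.ApproxInner D

def SeqApproximatelyAmenable : Prop :=
  ∀ (X : Type) (_ : NormedAddCommGroup X) (_ : NormedSpace ℂ X) (M : BanachBimod A X)
    (D : A →L[ℂ] (X →L[ℂ] ℂ)), M.dual.IsDerivation D → M.dual.SeqApproxInner D

def BddApproximatelyAmenable : Prop :=
  ∀ (X : Type) (_ : NormedAddCommGroup X) (_ : NormedSpace ℂ X) (M : BanachBimod A X)
    (D : A →L[ℂ] (X →L[ℂ] ℂ)), M.dual.IsDerivation D → M.dual.BddApproxInner D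

def WeakStarApproximatelyAmenable : Prop :=
  ∀ (X : Type) (_ : NormedAddCommGroup X) (_ : NormedSpace ℂ X) (M : BanachBimod A X)
    (D : A →L[ℂ] (X →L[ℂ] ℂ)), M.dual.IsDerivation D → M.WeakStarApproxInner D


/-- The projective tensor "seminorm" on the algebraic tensor product `V ⊗[ℂ] W`, relative to
given (semi)norm functions on the factors: the infimum of `∑ να aₙ * νβ bₙ` over all
representations `t = ∑ aₙ ⊗ bₙ`. -/
def projTensorSN {V W : Type} [AddCommGroup V] [Module ℂ V] [AddCommGroup W] [Module ℂ W]
    (να : V → ℝ) (νβ : W → ℝ) (t : V ⊗[ℂ] W) : ℝ :=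
  sInf {r : ℝ | ∃ L : List (V × W), t = (L.map fun p => p.1 ⊗ₜ[ℂ] p.2).sum ∧
      r = (L.map fun p => να p.1 * νβ p.2).sum}

section SN

variable (C : Type) [NonUnitalRing C] [Module ℂ C] [IsScalarTower ℂ C C] [SMulCommClass ℂ C C]

/-- The left action `u ↦ a·u` of `C` on `C ⊗[ℂ] C`. -/
def tactL (a : C) : C ⊗[ℂ] C →ₗ[ℂ] C ⊗[ℂ] C :=
  TensorProduct.map (LinearMap.mulLeft ℂ a) LinearMap.id

/-- The right action `u ↦ u·a` of `C` on `C ⊗[ℂ] C`. -/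
def tactR (a : C) : C ⊗[ℂ] C →ₗ[ℂ] C ⊗[ℂ] C :=
  TensorProduct.map LinearMap.id (LinearMap.mulRight ℂ a)

/-- The multiplication map `π : C ⊗ C → C`. -/
def tpi : C ⊗[ℂ] C →ₗ[ℂ] C := LinearMap.mul' ℂ C

variable (ν : C → ℝ)

/-- Pseudo-amenability of the algebra `C` relative to the (semi)norm function `ν`:
there is an approximate diagonal, i.e. a net `(u_i) ⊂ C ⊗̂ C` with
`a·u_i − u_i·a → 0` (in the projective tensor seminorm) and `π(u_i)a → a` for all `a ∈ C`. -/
def PseudoAmenableSN : Prop :=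
  ∃ (ι : Type) (φ : Filter ι) (u : ι → C ⊗[ℂ] C), φ.NeBot ∧
    (∀ a : C, Tendsto (fun i => projTensorSN ν ν (tactL C a (u i) - tactR C a (u i))) φ (𝓝 0)) ∧
    (∀ a : C, Tendsto (fun i => ν (tpi C (u i) * a - a)) φ (𝓝 0))

/-- Sequential pseudo-amenability. -/
def SeqPseudoAmenableSN : Prop :=
  ∃ u : ℕ → C ⊗[ℂ] C,
    (∀ a : C, Tendsto (fun n => projTensorSN ν ν (tactL C a (u n) - tactR C a (u n))) atTop (𝓝 0)) ∧
    (∀ a : C, Tendsto (fun n => ν (tpi C (u n) * a - a)) atTop (𝓝 0))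

/-- Pseudo-contractibility: there is a central approximate diagonal. -/
def PseudoContractibleSN : Prop :=
  ∃ (ι : Type) (φ : Filter ι) (u : ι → C ⊗[ℂ] C), φ.NeBot ∧
    (∀ (a : C) i, tactL C a (u i) = tactR C a (u i)) ∧
    (∀ a : C, Tendsto (fun i => ν (tpi C (u i) * a - a)) φ (𝓝 0))

/-- Bounded pseudo-contractibility: a central approximate diagonal `(u_i)` such that
`(π(u_i))` is a multiplier-bounded approximate identity. -/
def BddPseudoContractibleSN : Prop :=
  ∃ (ι : Type) (φ : Filter ι) (u : ι → C ⊗[ℂ] C), φ.NeBot ∧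
    (∀ (a : C) i, tactL C a (u i) = tactR C a (u i)) ∧
    (∀ a : C, Tendsto (fun i => ν (tpi C (u i) * a - a)) φ (𝓝 0)) ∧
    (∃ K : ℝ, 0 < K ∧ ∀ i (a : C), ν (tpi C (u i) * a) ≤ K * ν a)

end SN

section Normed

variable (A : Type) [NonUnitalNormedRing A] [NormedSpace ℂ A]
  [IsScalarTower ℂ A A] [SMulCommClass ℂ A A]

def PseudoAmenable : Prop := PseudoAmenableSN A (fun a => ‖a‖)
def SeqPseudoAmenable : Prop := SeqPseudoAmenableSN A (fun a => ‖a‖)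
def PseudoContractible : Prop := PseudoContractibleSN A (fun a => ‖a‖)
def BddPseudoContractible : Prop := BddPseudoContractibleSN A (fun a => ‖a‖)

/-- `A` has a (two-sided) approximate identity. -/
def HasApproxIdentity : Prop :=
  ∃ (ι : Type) (φ : Filter ι) (e : ι → A), φ.NeBot ∧
    ∀ a : A, Tendsto (fun i => e i * a) φ (𝓝 a) ∧ Tendsto (fun i => a * e i) φ (𝓝 a)

/-- `A` has a bounded (two-sided) approximate identity. -/
def HasBoundedApproxIdentity : Prop :=
  ∃ (ι : Type) (φ : Filter ι) (e : ι → A), φ.NeBot ∧ (∃ C : ℝ, ∀ i, ‖e i‖ ≤ C) ∧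
    ∀ a : A, Tendsto (fun i => e i * a) φ (𝓝 a) ∧ Tendsto (fun i => a * e i) φ (𝓝 a)

/-- `A` has a left approximate identity. -/
def HasLeftApproxIdentity : Prop :=
  ∃ (ι : Type) (φ : Filter ι) (e : ι → A), φ.NeBot ∧
    ∀ a : A, Tendsto (fun i => e i * a) φ (𝓝 a)

/-- `A` has a right approximate identity. -/
def HasRightApproxIdentity : Prop :=
  ∃ (ι : Type) (φ : Filter ι) (e : ι → A), φ.NeBot ∧
    ∀ a : A, Tendsto (fun i => a * e i) φ (𝓝 a)

/-- `A` has a central approximate identity. -/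
def HasCentralApproxIdentity : Prop :=
  ∃ (ι : Type) (φ : Filter ι) (e : ι → A), φ.NeBot ∧
    (∀ (a : A) i, a * e i = e i * a) ∧
    ∀ a : A, Tendsto (fun i => e i * a) φ (𝓝 a)

/-- `A` is approximately biprojective: there is a net `(T_α)` of bounded `A`-bimodule morphisms
`A → A ⊗̂ A` with `π ∘ T_α (a) → a` for every `a`. -/
def ApproxBiprojective : Prop :=
  ∃ (ι : Type) (φ : Filter ι) (T : ι → (A →ₗ[ℂ] A ⊗[ℂ] A)), φ.NeBot ∧
    (∀ i, ∃ C : ℝ, ∀ a, projTensorSN (fun x : A => ‖x‖) (fun x : A => ‖x‖) (T i a) ≤ C * ‖a‖) ∧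
    (∀ i (a b : A), T i (a * b) = tactL A a (T i b) ∧ T i (a * b) = tactR A b (T i a)) ∧
    (∀ a : A, Tendsto (fun i => tpi A (T i a)) φ (𝓝 a))

end Normed


end

/-- A left Banach `A`-module structure on a Banach space `X`. -/
structure LeftBanachMod (A : Type) [NonUnitalNormedRing A] [NormedSpace ℂ A]
    [IsScalarTower ℂ A A] [SMulCommClass ℂ A A]
    (X : Type) [NormedAddCommGroup X] [NormedSpace ℂ X] where
  l : A → X →L[ℂ] X
  l_add : ∀ a b, l (a + b) = l a + l b
  l_smul : ∀ (c : ℂ) a, l (c • a) = c • l a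
  l_bound : ∃ C : ℝ, ∀ a, ‖l a‖ ≤ C * ‖a‖
  l_mul : ∀ a b, l (a * b) = (l a).comp (l b)

/-!
The operators `T` with `f ∘ T = 0` form a sub-bimodule `N` of `B(Y, X)`. The inner derivation
`a ↦ a·F − F·a` takes its values in `N`, because `f` is a module morphism and `f ∘ F = id`.
If, as a derivation into `N`, it is a pointwise limit of inner derivations implemented by a net
`T_i ∈ N`, then `F - T_i` are right inverses of `f` whose commutators with `A` tend to `0`.

Since `N` need not be a dual bimodule, the derivation is first composed with the embedding
`N → N**`, where it is weak* approximately inner. A Hahn–Banach argument on the finite powers of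
`N` brings the approximation back to `N`: a functional on `N^S` that annihilates all inner
derivations also annihilates their weak* limits in `(N**)^S`.
-/

theorem mem_closure_of_forall_restrict_mem_closure {ι : Type*} {E : ι → Type*}
    [∀ i, TopologicalSpace (E i)] {s : Set (∀ i, E i)} {x : ∀ i, E i}
    (h : ∀ I : Finset ι, I.restrict x ∈ closure (I.restrict '' s)) : x ∈ closure s := by
  refine mem_closure_iff_nhds.2 fun t ht => ?_
  rw [nhds_pi] at ht
  obtain ⟨I, u, hu, hut⟩ := mem_pi'.1 ht
  have hbox : Set.univ.pi (fun i : I => u i) ∈ 𝓝 (I.restrict x) :=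
    set_pi_mem_nhds Set.finite_univ fun i _ => hu i
  obtain ⟨_, hy, y, hys, rfl⟩ := mem_closure_iff_nhds.1 (h I) _ hbox
  exact ⟨y, hut fun i hi => hy ⟨i, hi⟩ trivial, hys⟩

section HahnBanach

variable {𝕜 E G : Type*} [RCLike 𝕜] [SeminormedAddCommGroup E] [NormedSpace 𝕜 E]
  [SeminormedAddCommGroup G] [NormedSpace 𝕜 G]

theorem mem_topologicalClosure_of_forall_dual {W : Submodule 𝕜 G} {y : G}
    (h : ∀ ψ : StrongDual 𝕜 G, (∀ w ∈ W, ψ w = 0) → ψ y = 0) : y ∈ W.topologicalClosure := by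
  have : IsClosed (W.topologicalClosure : Set G) := W.isClosed_topologicalClosure
  rw [← Submodule.Quotient.mk_eq_zero]
  refine SeparatingDual.eq_zero_of_forall_dual_eq_zero (R := 𝕜) fun ψ =>
    h (ψ.comp W.topologicalClosure.mkQL) fun w hw => ?_
  have hw0 : W.topologicalClosure.mkQL w = 0 :=
    (Submodule.Quotient.mk_eq_zero _).2 (W.le_topologicalClosure hw)
  rw [ContinuousLinearMap.comp_apply, hw0, map_zero]

theorem mem_closure_range_of_tendsto_bidual {ι : Type*} {φ : Filter ι} [φ.NeBot] (T : E →L[𝕜] G)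
    {ξ : ι → StrongDual 𝕜 (StrongDual 𝕜 E)} {y : G}
    (h : ∀ ψ : StrongDual 𝕜 G, Tendsto (fun i => ξ i (ψ.comp T)) φ (𝓝 (ψ y))) :
    y ∈ closure (Set.range T) := by
  refine mem_topologicalClosure_of_forall_dual (W := T.range) fun ψ hψ => ?_
  have hT : ψ.comp T = 0 := ContinuousLinearMap.ext fun x => hψ _ ⟨x, rfl⟩
  simpa [hT, tendsto_const_nhds_iff, eq_comm] using h ψ

end HahnBanach

section BanachModules

variable {A : Type} [NonUnitalNormedRing A] [NormedSpace ℂ A]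
  {X Y : Type} [NormedAddCommGroup X] [NormedSpace ℂ X] [NormedAddCommGroup Y] [NormedSpace ℂ Y]

namespace BanachBimod

/-- The inner derivation `a ↦ a·x − x·a` of a Banach bimodule, as a bounded linear map. -/
noncomputable def innerDerivation (M : BanachBimod A X) (x : X) : A →L[ℂ] X :=
  LinearMap.mkContinuousOfExistsBound
    { toFun := fun a => M.l a x - M.r a x
      map_add' := fun a b => by simp only [M.l_add, M.r_add, add_apply]; abel
      map_smul' := fun c a => by simp [M.l_smul, M.r_smul, smul_sub] } <| by
    obtain ⟨C, hC⟩ := M.l_bound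
    obtain ⟨C', hC'⟩ := M.r_bound
    refine ⟨C * ‖x‖ + C' * ‖x‖, fun a => ?_⟩
    calc ‖M.l a x - M.r a x‖
        ≤ ‖M.l a x‖ + ‖M.r a x‖ := norm_sub_le _ _
      _ ≤ C * ‖a‖ * ‖x‖ + C' * ‖a‖ * ‖x‖ :=
          add_le_add ((M.l a).le_of_opNorm_le (hC a) x) ((M.r a).le_of_opNorm_le (hC' a) x)
      _ = (C * ‖x‖ + C' * ‖x‖) * ‖a‖ := by ring

@[simp]
theorem innerDerivation_apply (M : BanachBimod A X) (x : X) (a : A) :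
    M.innerDerivation x a = M.l a x - M.r a x :=
  rfl

theorem isDerivation_innerDerivation (M : BanachBimod A X) (x : X) :
    M.IsDerivation (M.innerDerivation x) := fun a b => by
  have hlr : M.l a (M.r b x) = M.r b (M.l a x) := DFunLike.congr_fun (M.lr_comm a b) x
  simp only [innerDerivation_apply, M.l_mul, M.r_mul, ContinuousLinearMap.comp_apply, map_sub, hlr]
  abel

theorem approxInner_iff_mem_closure {M : BanachBimod A X} {D : A →L[ℂ] X} :
    M.ApproxInner D ↔ ⇑D ∈ closure (Set.range fun x => ⇑(M.innerDerivation x)) := by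
  constructor
  · rintro ⟨ι, φ, x, _, hx⟩
    exact mem_closure_of_tendsto (tendsto_pi_nhds.2 hx) (.of_forall fun i => ⟨x i, rfl⟩)
  · intro hD
    refine ⟨X, comap (fun x => ⇑(M.innerDerivation x)) (𝓝 ⇑D), id, ?_,
      tendsto_pi_nhds.1 tendsto_comap⟩
    rw [comap_neBot_iff]
    intro t ht
    obtain ⟨_, hxt, x, rfl⟩ := mem_closure_iff_nhds.1 hD t ht
    exact ⟨x, hxt⟩

theorem IsDerivation.inclusionInDoubleDual_comp {M : BanachBimod A X} {D : A →L[ℂ] X}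
    (hD : M.IsDerivation D) :
    M.dual.dual.IsDerivation ((NormedSpace.inclusionInDoubleDual ℂ X).comp D) := fun a b => by
  ext ψ
  simp [hD a b, dual, NormedSpace.dual_def]

theorem ApproxInner.weakStarApproxInner {M : BanachBimod A X} {D : A →L[ℂ] StrongDual ℂ X}
    (h : M.dual.ApproxInner D) : M.WeakStarApproxInner D := by
  obtain ⟨ι, φ, x, hφ, hx⟩ := h
  exact ⟨ι, φ, x, hφ, fun a ξ =>
    ((ContinuousLinearMap.apply ℂ ℂ ξ).continuous.tendsto _).comp (hx a)⟩

theorem WeakStarApproxInner.approxInner {M : BanachBimod A X} {D : A →L[ℂ] X}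
    (h : M.dual.WeakStarApproxInner ((NormedSpace.inclusionInDoubleDual ℂ X).comp D)) :
    M.ApproxInner D := by
  classical
  obtain ⟨ι, φ, ξ, hφ, hξ⟩ := h
  refine approxInner_iff_mem_closure.2 (mem_closure_of_forall_restrict_mem_closure fun S => ?_)
  let T : X →L[ℂ] (S → X) := .pi fun a => M.l a - M.r a
  rw [← Set.range_comp]
  refine mem_closure_range_of_tendsto_bidual (φ := φ) (ξ := ξ) T fun ψ => ?_
  let ψ' (a : S) : StrongDual ℂ X := ψ.comp (.single ℂ (fun _ => X) a)
  have hψ (v : S → X) : ψ v = ∑ a, ψ' a (v a) :=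
    (ContinuousLinearMap.sum_comp_single ℂ (fun _ => X) ψ v).symm
  have hψT : ψ.comp T = ∑ a, ((ψ' a).comp (M.l a) - (ψ' a).comp (M.r a)) := by
    ext x
    simp [hψ, T]
  simp only [hψT, hψ, map_sum, map_sub]
  exact tendsto_finsetSum _ fun a _ => hξ a (ψ' a)

/-- The restriction of a Banach bimodule to a subspace invariant under both actions. -/
noncomputable def restrict (M : BanachBimod A X) (p : Submodule ℂ X)
    (hl : ∀ a, ∀ x ∈ p, M.l a x ∈ p) (hr : ∀ a, ∀ x ∈ p, M.r a x ∈ p) : BanachBimod A p where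
  l a := (M.l a).restrict (hl a)
  r a := (M.r a).restrict (hr a)
  l_add a b := by ext; simp [M.l_add]
  l_smul c a := by ext; simp [M.l_smul]
  r_add a b := by ext; simp [M.r_add]
  r_smul c a := by ext; simp [M.r_smul]
  l_bound := by
    obtain ⟨C, hC⟩ := M.l_bound
    exact ⟨C, fun a => ContinuousLinearMap.opNorm_le_bound _ ((norm_nonneg _).trans (hC a))
      fun x => (M.l a).le_of_opNorm_le (hC a) x⟩
  r_bound := by
    obtain ⟨C, hC⟩ := M.r_bound
    exact ⟨C, fun a => ContinuousLinearMap.opNorm_le_bound _ ((norm_nonneg _).trans (hC a))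
      fun x => (M.r a).le_of_opNorm_le (hC a) x⟩
  l_mul a b := by ext; simp [M.l_mul]
  r_mul a b := by ext; simp [M.r_mul]
  lr_comm a b := by
    ext x
    exact DFunLike.congr_fun (M.lr_comm a b) (x : X)

end BanachBimod

theorem ApproximatelyAmenable.weakStarApproximatelyAmenable (hA : ApproximatelyAmenable A) :
    WeakStarApproximatelyAmenable A :=
  fun X _ _ M D hD => (hA X _ _ M D hD).weakStarApproxInner

theorem WeakStarApproximatelyAmenable.approximatelyContractible
    (hA : WeakStarApproximatelyAmenable A) : ApproximatelyContractible A :=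
  fun _ _ _ M _ hD => (hA _ _ _ M.dual _ hD.inclusionInDoubleDual_comp).approxInner

theorem ApproximatelyContractible.exists_tendsto_innerDerivation_zero
    (hA : ApproximatelyContractible A) (M : BanachBimod A X) {p : Submodule ℂ X}
    (hl : ∀ a, ∀ x ∈ p, M.l a x ∈ p) (hr : ∀ a, ∀ x ∈ p, M.r a x ∈ p) {x : X}
    (hx : ∀ a, M.innerDerivation x a ∈ p) :
    ∃ (ι : Type) (φ : Filter ι) (u : ι → X), φ.NeBot ∧ (∀ i, x - u i ∈ p) ∧
      ∀ a, Tendsto (fun i => M.innerDerivation (u i) a) φ (𝓝 0) := by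
  let N : BanachBimod A p := M.restrict p hl hr
  let D : A →L[ℂ] p := (M.innerDerivation x).codRestrict p hx
  have hD : N.IsDerivation D := fun a b => Subtype.ext (M.isDerivation_innerDerivation x a b)
  obtain ⟨ι, φ, z, hφ, hz⟩ := hA p _ _ N D hD
  refine ⟨ι, φ, fun i => x - z i, hφ, fun i => by simp, fun a => ?_⟩
  have hlim : Tendsto (fun i => M.innerDerivation x a - M.innerDerivation (z i) a) φ (𝓝 0) := by
    rw [← sub_self (M.innerDerivation x a)]
    exact tendsto_const_nhds.sub ((continuous_subtype_val.tendsto _).comp (hz a))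
  refine hlim.congr fun i => ?_
  simp only [BanachBimod.innerDerivation_apply, map_sub]
  abel

variable [IsScalarTower ℂ A A] [SMulCommClass ℂ A A]

/-- The bimodule `B(Y, X)` of bounded operators between left Banach modules, with
`(a·g)(y) = a(g(y))` and `(g·a)(y) = g(a·y)`. -/
noncomputable def LeftBanachMod.hom (MX : LeftBanachMod A X) (MY : LeftBanachMod A Y) :
    BanachBimod A (Y →L[ℂ] X) where
  l a := ContinuousLinearMap.compL ℂ Y X X (MX.l a)
  r a := (ContinuousLinearMap.compL ℂ Y Y X).flip (MY.l a)
  l_add a b := by simp only [MX.l_add, map_add]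
  l_smul c a := by simp only [MX.l_smul, map_smul]
  r_add a b := by simp only [MY.l_add, map_add]
  r_smul c a := by simp only [MY.l_smul, map_smul]
  l_bound := by
    obtain ⟨C, hC⟩ := MX.l_bound
    refine ⟨C, fun a => ContinuousLinearMap.opNorm_le_bound _ ((norm_nonneg _).trans (hC a))
      fun g => ((MX.l a).opNorm_comp_le g).trans ?_⟩
    gcongr
    exact hC a
  r_bound := by
    obtain ⟨C, hC⟩ := MY.l_bound
    refine ⟨C, fun a => ContinuousLinearMap.opNorm_le_bound _ ((norm_nonneg _).trans (hC a))
      fun g => (g.opNorm_comp_le (MY.l a)).trans ?_⟩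
    rw [mul_comm]
    gcongr
    exact hC a
  l_mul a b := by ext; simp [MX.l_mul]
  r_mul a b := by ext; simp [MY.l_mul]
  lr_comm a b := by ext; simp

@[simp]
theorem LeftBanachMod.hom_l_apply (MX : LeftBanachMod A X) (MY : LeftBanachMod A Y) (a : A)
    (g : Y →L[ℂ] X) : (MX.hom MY).l a g = (MX.l a).comp g :=
  rfl

@[simp]
theorem LeftBanachMod.hom_r_apply (MX : LeftBanachMod A X) (MY : LeftBanachMod A Y) (a : A)
    (g : Y →L[ℂ] X) : (MX.hom MY).r a g = g.comp (MY.l a) :=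
  rfl

theorem approxAmenable_right_inverse_net_general (hA : WeakStarApproximatelyAmenable A)
    (MX : LeftBanachMod A X) (MY : LeftBanachMod A Y)
    (f : X →L[ℂ] Y) (hf : ∀ a, f.comp (MX.l a) = (MY.l a).comp f)
    (F : Y →L[ℂ] X) (hF : f.comp F = ContinuousLinearMap.id ℂ Y) :
    ∃ (ι : Type) (φ : Filter ι) (g : ι → (Y →L[ℂ] X)), φ.NeBot ∧
      (∀ i, f.comp (g i) = ContinuousLinearMap.id ℂ Y) ∧
      ∀ a : A, Tendsto (fun i => ‖(MX.l a).comp (g i) - (g i).comp (MY.l a)‖) φ (𝓝 0) := by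
  let p : Submodule ℂ (Y →L[ℂ] X) := (ContinuousLinearMap.compL ℂ Y X Y f).ker
  have mem_p {T : Y →L[ℂ] X} : T ∈ p ↔ f.comp T = 0 := Iff.rfl
  have hl (a : A) (T : Y →L[ℂ] X) (hT : T ∈ p) : (MX.hom MY).l a T ∈ p := by
    rw [mem_p, LeftBanachMod.hom_l_apply, ← ContinuousLinearMap.comp_assoc, hf,
      ContinuousLinearMap.comp_assoc, mem_p.1 hT, ContinuousLinearMap.comp_zero]
  have hr (a : A) (T : Y →L[ℂ] X) (hT : T ∈ p) : (MX.hom MY).r a T ∈ p := by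
    rw [mem_p, LeftBanachMod.hom_r_apply, ← ContinuousLinearMap.comp_assoc, mem_p.1 hT,
      ContinuousLinearMap.zero_comp]
  have hFp (a : A) : (MX.hom MY).innerDerivation F a ∈ p := by
    have hl_F : f.comp ((MX.l a).comp F) = MY.l a := by
      rw [← ContinuousLinearMap.comp_assoc, hf, ContinuousLinearMap.comp_assoc, hF,
        ContinuousLinearMap.comp_id]
    have hr_F : f.comp (F.comp (MY.l a)) = MY.l a := by
      rw [← ContinuousLinearMap.comp_assoc, hF, ContinuousLinearMap.id_comp]
    rw [mem_p, BanachBimod.innerDerivation_apply, LeftBanachMod.hom_l_apply,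
      LeftBanachMod.hom_r_apply, ContinuousLinearMap.comp_sub, hl_F, hr_F, sub_self]
  obtain ⟨ι, φ, g, hφ, hg, hlim⟩ :=
    hA.approximatelyContractible.exists_tendsto_innerDerivation_zero (MX.hom MY) hl hr hFp
  refine ⟨ι, φ, g, hφ, fun i => ?_, fun a => tendsto_zero_iff_norm_tendsto_zero.1 (hlim a)⟩
  have hFg : f.comp F - f.comp (g i) = 0 := by
    rw [← ContinuousLinearMap.comp_sub, mem_p.1 (hg i)]
  rw [← sub_eq_zero.1 hFg, hF]

end BanachModules

/-- Let `A` be an approximately amenable Banach algebra, `X`, `Y` left Banach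
`A`-modules and `f : X → Y` a bounded left `A`-module morphism with a bounded linear right
inverse `F`. Then there is a net `(f_α)` of bounded linear right inverses of `f` with
`‖a·f_α − f_α·a‖ → 0` for every `a ∈ A` (with the bimodule actions
`(a·g)(y) = a(g(y))`, `(g·a)(y) = g(a·y)` on `B(Y,X)`). -/
theorem approxAmenable_right_inverse_net
    (A : Type) [NonUnitalNormedRing A] [NormedSpace ℂ A]
    [IsScalarTower ℂ A A] [SMulCommClass ℂ A A] [CompleteSpace A]
    (hA : ApproximatelyAmenable A)
    (X Y : Type) [NormedAddCommGroup X] [NormedSpace ℂ X] [CompleteSpace X]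
    [NormedAddCommGroup Y] [NormedSpace ℂ Y] [CompleteSpace Y]
    (MX : LeftBanachMod A X) (MY : LeftBanachMod A Y)
    (f : X →L[ℂ] Y) (hf : ∀ a, f.comp (MX.l a) = (MY.l a).comp f)
    (F : Y →L[ℂ] X) (hF : f.comp F = ContinuousLinearMap.id ℂ Y) :
    ∃ (ι : Type) (φ : Filter ι) (g : ι → (Y →L[ℂ] X)), φ.NeBot ∧
      (∀ i, f.comp (g i) = ContinuousLinearMap.id ℂ Y) ∧
      ∀ a : A, Tendsto (fun i => ‖(MX.l a).comp (g i) - (g i).comp (MY.l a)‖) φ (𝓝 0) :=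
  approxAmenable_right_inverse_net_general hA.weakStarApproximatelyAmenable MX MY f hf F hF
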